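/- There exists an entire function S : ℂ → ℂ such that: (i) the zero set of S is exactly {tₙ : n ∈ ℕ}; (ii) every zero of S is simple (i.e., S'(tₙ) ≠ 0 for all n); (iii) S satisfies conj(S(conj z)) = S(z) for all z ∈ ℂ; and (iv) |S'(tₙ)| = |sₙ| for every n ∈ ℕ. -/

import Mathlib

/-!
If `W` is entire with simple zeros exactly at the `tᵢ` and `h` is entire, then `S = W · exp h` has
the same zeros and `S'(tᵢ) = W'(tᵢ) exp (h(tᵢ))`, so it suffices that
`h(tᵢ) = log (|sᵢ| / |W'(tᵢ)|)`. Since `W(z) / (z - tᵢ)` vanishes at every `tⱼ` with `j ≠ i`, such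
an `h` can be written as a series of multiples of these quotients; extra factors `(z / tᵢ) ^ mᵢ`,
which are `1` at `tᵢ` and tiny on `|z| < |tᵢ| / 2` for large `mᵢ`, make it converge. The reflection
`F*(z) = conj (F (conj z))` fixes a Weierstrass product with real zeros, and averaging `h` with `h*`
keeps its real values at the real points `tᵢ`.
-/

open Bornology Filter Metric ComplexConjugate

section LocallyNormalConvergence

variable {ι κ X E : Type*} [TopologicalSpace X] [SeminormedAddCommGroup E]

/-- Normal convergence of the series `∑ fᵢ` on compact sets. Finitely many terms, depending on the
compact set, are exempt from the bound, as for the factors whose zeros lie in the compact set. -/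
def NormallySummable (f : ι → X → E) : Prop :=
  ∀ K, IsCompact K → ∃ u : ι → ℝ, Summable u ∧ ∀ᶠ i in cofinite, ∀ x ∈ K, ‖f i x‖ ≤ u i

namespace NormallySummable

lemma comp_injective {f : ι → X → E} (hf : NormallySummable f) {e : κ → ι}
    (he : Function.Injective e) : NormallySummable fun k ↦ f (e k) := fun K hK ↦
  have ⟨u, hu, hfu⟩ := hf K hK
  ⟨u ∘ e, hu.comp_injective he, he.tendsto_cofinite.eventually hfu⟩

lemma summable_norm {f : ι → X → E} (hf : NormallySummable f) (x : X) :
    Summable fun i ↦ ‖f i x‖ := by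
  obtain ⟨u, hu, hfu⟩ := hf {x} isCompact_singleton
  exact hu.of_norm_bounded_eventually (by simpa using hfu)

lemma differentiable_tsum {E : Type*} [NormedAddCommGroup E] [NormedSpace ℂ E] [CompleteSpace E]
    {f : ι → ℂ → E} (hf : NormallySummable f) (hd : ∀ i, Differentiable ℂ (f i)) :
    Differentiable ℂ fun z ↦ ∑' i, f i z :=
  differentiableOn_univ.1 <| SummableLocallyUniformlyOn.differentiableOn isOpen_univ
    (.of_locally_bounded_eventually isOpen_univ fun K _ ↦ hf K) fun i z _ ↦ hd i z

section Products

variable {R : Type*} [NormedCommRing R] [NormOneClass R] [CompleteSpace R]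

lemma multipliable {P : ι → X → R} (hP : NormallySummable fun i x ↦ P i x - 1) (x : X) :
    Multipliable fun i ↦ P i x := by
  simpa using multipliable_one_add_of_summable (hP.summable_norm x)

lemma tprod_eq_zero_iff [NormMulClass R] {P : ι → X → R}
    (hP : NormallySummable fun i x ↦ P i x - 1) (x : X) :
    ∏' i, P i x = 0 ↔ ∃ i, P i x = 0 := by
  refine ⟨fun h ↦ ?_, fun ⟨i, hi⟩ ↦ tprod_of_exists_eq_zero ⟨i, hi⟩⟩
  by_contra! hne
  exact tprod_one_add_ne_zero_of_summable (by simpa using hne) (hP.summable_norm x)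
    (by simpa using h)

lemma mul_tprod_compl_singleton {P : ι → X → R} (hP : NormallySummable fun i x ↦ P i x - 1)
    (j : ι) (x : X) : P j x * ∏' i : ({j}ᶜ : Set ι), P i x = ∏' i, P i x := by
  rw [← tprod_singleton j fun i ↦ P i x]
  exact Multipliable.tprod_mul_tprod_compl (f := fun i ↦ P i x) (hasProd_fintype _ _).multipliable
    ((hP.comp_injective Subtype.val_injective).multipliable x)

lemma hasProdLocallyUniformlyOn [LocallyCompactSpace X] {P : ι → X → R}
    (hP : NormallySummable fun i x ↦ P i x - 1) (hc : ∀ i, Continuous (P i)) :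
    HasProdLocallyUniformlyOn P (fun x ↦ ∏' i, P i x) Set.univ := by
  refine hasProdLocallyUniformlyOn_of_forall_compact isOpen_univ fun K _ hK ↦ ?_
  obtain ⟨u, hu, hPu⟩ := hP K hK
  simpa using hu.hasProdUniformlyOn_one_add hK hPu fun i ↦
    ((hc i).sub continuous_const).continuousOn

variable [NormedAlgebra ℂ R] {P : ι → ℂ → R}

lemma differentiable_tprod (hP : NormallySummable fun i z ↦ P i z - 1)
    (hd : ∀ i, Differentiable ℂ (P i)) : Differentiable ℂ fun z ↦ ∏' i, P i z := by
  have h := hP.hasProdLocallyUniformlyOn fun i ↦ (hd i).continuous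
  rw [hasProdLocallyUniformlyOn_iff_tendstoLocallyUniformlyOn] at h
  refine differentiableOn_univ.1 (h.differentiableOn (.of_forall fun s ↦ ?_) isOpen_univ)
  exact (Differentiable.fun_finsetProd fun i _ ↦ hd i).differentiableOn

lemma deriv_tprod_ne_zero [NormMulClass R] (hP : NormallySummable fun i z ↦ P i z - 1)
    (hd : ∀ i, Differentiable ℂ (P i)) {j : ι} {a : ℂ} (hj : P j a = 0)
    (hj_deriv : deriv (P j) a ≠ 0) (hne : ∀ i ≠ j, P i a ≠ 0) :
    deriv (fun z ↦ ∏' i, P i z) a ≠ 0 := by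
  have hQ := hP.comp_injective (Subtype.val_injective (p := (· ∈ ({j}ᶜ : Set ι))))
  have hQa : ∏' i : ({j}ᶜ : Set ι), P i a ≠ 0 := by
    simpa [hQ.tprod_eq_zero_iff] using hne
  simp_rw [← hP.mul_tprod_compl_singleton j]
  rw [deriv_fun_mul (hd j a) (hQ.differentiable_tprod (fun i ↦ hd i) a), hj, zero_mul, add_zero]
  exact mul_ne_zero hj_deriv hQa

end Products

end NormallySummable

end LocallyNormalConvergence

section ElementaryFactor

/-- The Weierstrass elementary factor `(1 - z) exp (z + z² / 2 + ⋯ + zᵖ / p)` of genus `p`; the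
polynomial in the exponent is `-log (1 - z)` truncated after degree `p`. -/
noncomputable def elementaryFactor (p : ℕ) (z : ℂ) : ℂ :=
  (1 - z) * Complex.exp (-Complex.logTaylor (p + 1) (-z))

lemma differentiable_logTaylor_succ (p : ℕ) : Differentiable ℂ (Complex.logTaylor (p + 1)) :=
  fun z ↦ (Complex.hasDerivAt_logTaylor p z).differentiableAt

lemma differentiable_elementaryFactor (p : ℕ) : Differentiable ℂ (elementaryFactor p) := by
  have := differentiable_logTaylor_succ p
  unfold elementaryFactor
  fun_prop

lemma conj_elementaryFactor (p : ℕ) (z : ℂ) :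
    conj (elementaryFactor p z) = elementaryFactor p (conj z) := by
  simp [elementaryFactor, Complex.logTaylor, ← Complex.exp_conj]

lemma elementaryFactor_eq_zero_iff {p : ℕ} {z : ℂ} : elementaryFactor p z = 0 ↔ z = 1 := by
  simp [elementaryFactor, sub_eq_zero, eq_comm (a := z)]

lemma deriv_elementaryFactor_one_ne_zero (p : ℕ) : deriv (elementaryFactor p) 1 ≠ 0 := by
  have := differentiable_logTaylor_succ p
  unfold elementaryFactor
  rw [deriv_fun_mul (by fun_prop) (by fun_prop)]
  simp

lemma elementaryFactor_eq_exp (p : ℕ) {z : ℂ} (hz : ‖z‖ < 1) :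
    elementaryFactor p z =
      Complex.exp (Complex.log (1 + -z) - Complex.logTaylor (p + 1) (-z)) := by
  have hne : 1 + -z ≠ 0 :=
    Complex.slitPlane_ne_zero (Complex.mem_slitPlane_of_norm_lt_one (by simpa using hz))
  rw [elementaryFactor, sub_eq_add_neg (Complex.log _), Complex.exp_add, Complex.exp_log hne,
    sub_eq_add_neg]

lemma norm_elementaryFactor_sub_one_le (p : ℕ) {z : ℂ} (hz : ‖z‖ ≤ 1 / 2) :
    ‖elementaryFactor p z - 1‖ ≤ 4 * ‖z‖ ^ (p + 1) := by
  set w := Complex.log (1 + -z) - Complex.logTaylor (p + 1) (-z)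
  have hw : ‖w‖ ≤ 2 * ‖z‖ ^ (p + 1) :=
    calc ‖w‖ ≤ ‖z‖ ^ (p + 1) * (1 - ‖z‖)⁻¹ / (p + 1) := by
          simpa using Complex.norm_log_sub_logTaylor_le p (z := -z) (by rw [norm_neg]; linarith)
      _ ≤ ‖z‖ ^ (p + 1) * (1 - ‖z‖)⁻¹ :=
          div_le_self (mul_nonneg (by positivity) (inv_nonneg.2 (by linarith))) (by simp)
      _ ≤ ‖z‖ ^ (p + 1) * (1 - 1 / 2)⁻¹ := by gcongr
      _ = 2 * ‖z‖ ^ (p + 1) := by ring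
  have hw1 : ‖w‖ ≤ 1 :=
    calc ‖w‖ ≤ 2 * ‖z‖ ^ (p + 1) := hw
      _ ≤ 2 * ‖z‖ := by
          gcongr
          exact pow_le_of_le_one (norm_nonneg z) (by linarith) p.succ_ne_zero
      _ ≤ 1 := by linarith
  rw [elementaryFactor_eq_exp p (by linarith)]
  linarith [Complex.norm_exp_sub_one_le hw1]

end ElementaryFactor

section DivergentFamily

variable {ι E : Type*} [SeminormedAddCommGroup E] {t : ι → E}

lemma tendsto_cofinite_cobounded_iff_finite_norm_le :
    Tendsto t cofinite (cobounded E) ↔ ∀ R : ℝ, {i | ‖t i‖ ≤ R}.Finite := by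
  simp [← tendsto_norm_atTop_iff_cobounded, atTop_basis_Ioi.tendsto_right_iff, eventually_cofinite]

lemma countable_of_tendsto_cofinite_cobounded (ht : Tendsto t cofinite (cobounded E)) :
    Countable ι := by
  rw [← Set.countable_univ_iff, ← Set.iUnion_eq_univ_iff.2 fun i ↦ exists_nat_ge ‖t i‖]
  exact Set.countable_iUnion fun n : ℕ ↦
    (tendsto_cofinite_cobounded_iff_finite_norm_le.1 ht n).countable

lemma eventually_forall_mem_norm_lt_half (ht : Tendsto t cofinite (cobounded E)) {F : Type*}
    [SeminormedAddCommGroup F] {K : Set F} (hK : IsBounded K) :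
    ∀ᶠ i in cofinite, ∀ x ∈ K, ‖x‖ < ‖t i‖ / 2 := by
  obtain ⟨R, hR⟩ := hK.exists_norm_le
  have ht_norm := tendsto_norm_atTop_iff_cobounded.2 ht
  filter_upwards [ht_norm.eventually_gt_atTop (2 * R)] with i hi x hx
  linarith [hR x hx]

lemma normallySummable_of_norm_le_of_norm_lt_half {X F : Type*} [SeminormedAddCommGroup X]
    [SeminormedAddCommGroup F] {f : ι → X → F} {u : ι → ℝ}
    (ht : Tendsto t cofinite (cobounded E)) (hu : Summable u)
    (hf : ∀ i x, ‖x‖ < ‖t i‖ / 2 → ‖f i x‖ ≤ u i) : NormallySummable f := fun K hK ↦ by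
  refine ⟨u, hu, ?_⟩
  filter_upwards [eventually_forall_mem_norm_lt_half ht hK.isBounded] with i hi x hx
  exact hf i x (hi x hx)

lemma exists_nat_forall_summable_div_pow_succ (ht : Tendsto t cofinite (cobounded E)) :
    ∃ p : ι → ℕ, ∀ R : ℝ, Summable fun i ↦ (R / ‖t i‖) ^ (p i + 1) := by
  have := countable_of_tendsto_cofinite_cobounded ht
  have := Encodable.ofCountable ι
  refine ⟨Encodable.encode, fun R ↦ summable_geometric_two_encode.of_norm_bounded_eventually ?_⟩
  filter_upwards [eventually_forall_mem_norm_lt_half ht (isBounded_singleton (x := R))] with i hi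
  have hR : ‖R / ‖t i‖‖ ≤ 1 / 2 := by
    have := hi R rfl
    rw [norm_div, norm_norm, div_le_iff₀ (by linarith [norm_nonneg R])]
    linarith
  calc ‖(R / ‖t i‖) ^ (Encodable.encode i + 1)‖
      ≤ (1 / 2) ^ (Encodable.encode i + 1) := by rw [norm_pow]; gcongr
    _ ≤ (1 / 2) ^ Encodable.encode i := pow_le_pow_of_le_one (by simp) (by norm_num) (Nat.le_succ _)

end DivergentFamily

section WeierstrassProduct

/-- The elementary factor of genus `p` rescaled to vanish at `a`; at the origin, where `z / a` is
not available, it is replaced by `z`. -/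
noncomputable def weierstrassFactor (p : ℕ) (a z : ℂ) : ℂ :=
  if a = 0 then z else elementaryFactor p (z / a)

lemma differentiable_weierstrassFactor (p : ℕ) (a : ℂ) :
    Differentiable ℂ (weierstrassFactor p a) := by
  have := differentiable_elementaryFactor p
  unfold weierstrassFactor
  split_ifs <;> fun_prop

lemma conj_weierstrassFactor (p : ℕ) (a z : ℂ) :
    conj (weierstrassFactor p a z) = weierstrassFactor p (conj a) (conj z) := by
  simp [weierstrassFactor, apply_ite conj, conj_elementaryFactor]

lemma weierstrassFactor_eq_zero_iff {p : ℕ} {a z : ℂ} : weierstrassFactor p a z = 0 ↔ z = a := by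
  rw [weierstrassFactor]
  split_ifs with ha
  · rw [ha]
  · rw [elementaryFactor_eq_zero_iff, div_eq_one_iff_eq ha]

lemma deriv_weierstrassFactor_self_ne_zero (p : ℕ) (a : ℂ) :
    deriv (weierstrassFactor p a) a ≠ 0 := by
  unfold weierstrassFactor
  split_ifs with ha
  · simp
  · simp_rw [div_eq_inv_mul]
    rw [deriv_comp_mul_left, inv_mul_cancel₀ ha]
    exact smul_ne_zero (inv_ne_zero ha) (deriv_elementaryFactor_one_ne_zero p)

lemma norm_weierstrassFactor_sub_one_le (p : ℕ) {a z : ℂ} (hz : ‖z‖ < ‖a‖ / 2) :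
    ‖weierstrassFactor p a z - 1‖ ≤ 4 * (‖z‖ / ‖a‖) ^ (p + 1) := by
  have ha : 0 < ‖a‖ := by linarith [norm_nonneg z]
  rw [weierstrassFactor, if_neg (norm_pos_iff.1 ha), ← norm_div]
  apply norm_elementaryFactor_sub_one_le
  rw [norm_div, div_le_iff₀ ha]
  linarith

variable {ι : Type*} {t : ι → ℂ}

lemma normallySummable_weierstrassFactor_sub_one {p : ι → ℕ}
    (ht : Tendsto t cofinite (cobounded ℂ))
    (hp : ∀ R : ℝ, Summable fun i ↦ (R / ‖t i‖) ^ (p i + 1)) :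
    NormallySummable fun i z ↦ weierstrassFactor (p i) (t i) z - 1 := fun K hK ↦ by
  obtain ⟨R, hR⟩ := hK.isBounded.exists_norm_le
  refine ⟨_, (hp R).mul_left 4, ?_⟩
  filter_upwards [eventually_forall_mem_norm_lt_half ht hK.isBounded] with i hi z hz
  refine (norm_weierstrassFactor_sub_one_le (p i) (hi z hz)).trans ?_
  gcongr
  exact hR z hz

/-- The Weierstrass product with zeros `tᵢ`, counted with multiplicity, and genera `pᵢ`. -/
noncomputable def weierstrassProduct (p : ι → ℕ) (t : ι → ℂ) (z : ℂ) : ℂ :=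
  ∏' i, weierstrassFactor (p i) (t i) z

variable {p : ι → ℕ} (ht : Tendsto t cofinite (cobounded ℂ))
  (hp : ∀ R : ℝ, Summable fun i ↦ (R / ‖t i‖) ^ (p i + 1))
include ht hp

lemma differentiable_weierstrassProduct : Differentiable ℂ (weierstrassProduct p t) :=
  (normallySummable_weierstrassFactor_sub_one ht hp).differentiable_tprod
    fun i ↦ differentiable_weierstrassFactor (p i) (t i)

lemma weierstrassProduct_eq_zero_iff (z : ℂ) : weierstrassProduct p t z = 0 ↔ ∃ i, z = t i := by
  simp_rw [weierstrassProduct,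
    (normallySummable_weierstrassFactor_sub_one ht hp).tprod_eq_zero_iff,
    weierstrassFactor_eq_zero_iff]

lemma deriv_weierstrassProduct_ne_zero (ht_inj : Function.Injective t) (i : ι) :
    deriv (weierstrassProduct p t) (t i) ≠ 0 :=
  (normallySummable_weierstrassFactor_sub_one ht hp).deriv_tprod_ne_zero
    (fun j ↦ differentiable_weierstrassFactor (p j) (t j)) (weierstrassFactor_eq_zero_iff.2 rfl)
    (deriv_weierstrassFactor_self_ne_zero (p i) (t i))
    fun _ hj h ↦ hj (ht_inj (weierstrassFactor_eq_zero_iff.1 h)).symm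

lemma conj_weierstrassProduct (z : ℂ) :
    conj (weierstrassProduct p t z) = weierstrassProduct p (fun i ↦ conj (t i)) (conj z) := by
  simp_rw [weierstrassProduct, ← conj_weierstrassFactor]
  exact ((normallySummable_weierstrassFactor_sub_one ht hp).multipliable z).map_tprod
    (starRingEnd ℂ) Complex.continuous_conj

end WeierstrassProduct

section Interpolation

variable {ι E : Type*} [NormedAddCommGroup E] [NormedSpace ℂ E]

lemma exists_differentiable_eq_one_norm_smul_le {F : ℂ → E} (hF : Continuous F) (a : ℂ) {ε : ℝ}
    (hε : 0 < ε) : ∃ k : ℂ → ℂ, Differentiable ℂ k ∧ k a = 1 ∧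
      ∀ z, ‖z‖ < ‖a‖ / 2 → ‖k z • F z‖ ≤ ε := by
  rcases eq_or_ne a 0 with rfl | ha
  · refine ⟨1, differentiable_const 1, rfl, fun z hz ↦ ?_⟩
    exact absurd hz (by simp)
  obtain ⟨C, hC⟩ := (isCompact_closedBall (0 : ℂ) (‖a‖ / 2)).exists_bound_of_continuousOn
    hF.continuousOn
  have hC0 : 0 ≤ C := (norm_nonneg _).trans (hC 0 (mem_closedBall_self (by positivity)))
  obtain ⟨m, hm⟩ := exists_pow_lt_of_lt_one (div_pos hε (by linarith : 0 < C + 1))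
    one_half_lt_one
  refine ⟨fun z ↦ (z / a) ^ m, by fun_prop, by simp [ha], fun z hz ↦ ?_⟩
  have hza : ‖z / a‖ ≤ 1 / 2 := by
    rw [norm_div, div_le_iff₀ (norm_pos_iff.2 ha)]
    linarith
  have hFz : ‖F z‖ ≤ C + 1 := (hC z (by simpa using hz.le)).trans (by linarith)
  calc ‖(z / a) ^ m • F z‖ = ‖z / a‖ ^ m * ‖F z‖ := by rw [norm_smul, norm_pow]
    _ ≤ (1 / 2) ^ m * (C + 1) := by gcongr
    _ ≤ ε := ((lt_div_iff₀ (by linarith)).1 hm).le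

lemma differentiable_dslope [CompleteSpace E] {f : ℂ → E} (hf : Differentiable ℂ f) (a : ℂ) :
    Differentiable ℂ (dslope f a) :=
  differentiableOn_univ.1 <|
    (Complex.differentiableOn_dslope univ_mem).2 hf.differentiableOn

lemma exists_lagrange_basis {t : ι → ℂ} (ht : Tendsto t cofinite (cobounded ℂ))
    (ht_inj : Function.Injective t) : ∃ L : ι → ℂ → ℂ, (∀ i, Differentiable ℂ (L i)) ∧
      (∀ i, L i (t i) = 1) ∧ ∀ i j, i ≠ j → L i (t j) = 0 := by
  obtain ⟨p, hp⟩ := exists_nat_forall_summable_div_pow_succ ht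
  set W := weierstrassProduct p t
  have hW : Differentiable ℂ W := differentiable_weierstrassProduct ht hp
  have hW0 i : W (t i) = 0 := (weierstrassProduct_eq_zero_iff ht hp _).2 ⟨i, rfl⟩
  refine ⟨fun i z ↦ dslope W (t i) z / deriv W (t i),
    fun i ↦ (differentiable_dslope hW (t i)).div_const _, fun i ↦ ?_, fun i j hij ↦ ?_⟩
  · beta_reduce
    rw [dslope_same, div_self (deriv_weierstrassProduct_ne_zero ht hp ht_inj i)]
  · simp [dslope_of_ne W (ht_inj.ne hij.symm), slope_def_field, hW0]

theorem exists_differentiable_forall_eq [CompleteSpace E] {t : ι → ℂ}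
    (ht : Tendsto t cofinite (cobounded ℂ)) (ht_inj : Function.Injective t) (v : ι → E) :
    ∃ h : ℂ → E, Differentiable ℂ h ∧ ∀ i, h (t i) = v i := by
  have := countable_of_tendsto_cofinite_cobounded ht
  have := Encodable.ofCountable ι
  obtain ⟨L, hL, hL_self, hL_ne⟩ := exists_lagrange_basis ht ht_inj
  have hLv i : Differentiable ℂ fun z ↦ L i z • v i := (hL i).smul_const (v i)
  choose k hk hk_self hk_norm using fun i ↦ exists_differentiable_eq_one_norm_smul_le
    (hLv i).continuous (t i) (pow_pos (one_half_pos (α := ℝ)) (Encodable.encode i))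
  refine ⟨fun z ↦ ∑' i, k i z • L i z • v i,
    (normallySummable_of_norm_le_of_norm_lt_half ht summable_geometric_two_encode
      hk_norm).differentiable_tsum fun i ↦ (hk i).smul (hLv i), fun j ↦ ?_⟩
  beta_reduce
  rw [tsum_eq_single j fun i hi ↦ by simp [hL_ne i j hi], hk_self, hL_self, one_smul, one_smul]

end Interpolation

section RealSymmetry

variable {ι : Type*} {t : ι → ℝ}

lemma exists_differentiable_conj_symm_forall_eq
    (ht : Tendsto (fun i ↦ (t i : ℂ)) cofinite (cobounded ℂ)) (ht_inj : Function.Injective t)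
    (v : ι → ℝ) : ∃ h : ℂ → ℂ, Differentiable ℂ h ∧ (∀ z, conj (h (conj z)) = h z) ∧
      ∀ i, h (t i) = v i := by
  obtain ⟨h, hh, hv⟩ := exists_differentiable_forall_eq ht (Complex.ofReal_injective.comp ht_inj)
    fun i ↦ (v i : ℂ)
  have hstar : Differentiable ℂ fun z ↦ conj (h (conj z)) := fun z ↦
    differentiableAt_conj_conj_iff.2 (hh (conj z))
  refine ⟨fun z ↦ (h z + conj (h (conj z))) / 2, (hh.add hstar).div_const 2, fun z ↦ ?_,
    fun i ↦ ?_⟩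
  · simp only [map_div₀, map_add, Complex.conj_conj, map_ofNat, add_comm]
  · simp [hv]

lemma exists_differentiable_conj_symm_simple_zeros
    (ht : Tendsto (fun i ↦ (t i : ℂ)) cofinite (cobounded ℂ)) (ht_inj : Function.Injective t) :
    ∃ W : ℂ → ℂ, Differentiable ℂ W ∧ (∀ z, conj (W (conj z)) = W z) ∧
      (∀ z, W z = 0 ↔ ∃ i, z = t i) ∧ ∀ i, deriv W (t i) ≠ 0 := by
  obtain ⟨p, hp⟩ := exists_nat_forall_summable_div_pow_succ ht
  refine ⟨weierstrassProduct p fun i ↦ (t i : ℂ), differentiable_weierstrassProduct ht hp,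
    fun z ↦ ?_, weierstrassProduct_eq_zero_iff ht hp,
    deriv_weierstrassProduct_ne_zero ht hp (Complex.ofReal_injective.comp ht_inj)⟩
  simp [conj_weierstrassProduct ht hp]

end RealSymmetry

lemma deriv_mul_exp_of_eq_zero {W h : ℂ → ℂ} {a : ℂ} (hW : DifferentiableAt ℂ W a)
    (hh : DifferentiableAt ℂ h a) (hWa : W a = 0) :
    deriv (fun z ↦ W z * Complex.exp (h z)) a = deriv W a * Complex.exp (h a) := by
  rw [deriv_fun_mul hW hh.cexp, hWa, zero_mul, add_zero]

theorem exists_entire_with_prescribed_zeros_and_derivatives_general {ι : Type*}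
    (t : ι → ℝ) (ht : Function.Injective t)
    (hdisc : ∀ R : ℝ, {i : ι | |t i| ≤ R}.Finite)
    (s : ι → ℝ) (hs : ∀ i, s i ≠ 0) :
    ∃ S : ℂ → ℂ,
      Differentiable ℂ S ∧
      (∀ z : ℂ, S z = 0 ↔ ∃ i : ι, z = (t i : ℂ)) ∧
      (∀ i : ι, deriv S (t i) ≠ 0) ∧
      (∀ z : ℂ, conj (S (conj z)) = S z) ∧
      (∀ i : ι, ‖deriv S (t i)‖ = |s i|) := by
  have ht_top : Tendsto (fun i ↦ (t i : ℂ)) cofinite (cobounded ℂ) :=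
    tendsto_cofinite_cobounded_iff_finite_norm_le.2 (by simpa using hdisc)
  obtain ⟨W, hW, hW_conj, hW_zero, hW_deriv⟩ :=
    exists_differentiable_conj_symm_simple_zeros ht_top ht
  obtain ⟨h, hh, hh_conj, hh_val⟩ := exists_differentiable_conj_symm_forall_eq ht_top ht
    fun i ↦ Real.log (|s i| / ‖deriv W (t i)‖)
  have hS_norm i : ‖deriv (fun z ↦ W z * Complex.exp (h z)) (t i)‖ = |s i| := by
    have hpos : 0 < ‖deriv W (t i)‖ := norm_pos_iff.2 (hW_deriv i)
    rw [deriv_mul_exp_of_eq_zero (hW _) (hh _) ((hW_zero _).2 ⟨i, rfl⟩), norm_mul, hh_val,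
      Complex.norm_exp_ofReal, Real.exp_log (div_pos (abs_pos.2 (hs i)) hpos),
      mul_div_cancel₀ _ hpos.ne']
  refine ⟨fun z ↦ W z * Complex.exp (h z), hW.mul hh.cexp, fun z ↦ by simp [hW_zero],
    fun i ↦ norm_pos_iff.1 (hS_norm i ▸ abs_pos.2 (hs i)), fun z ↦ ?_, hS_norm⟩
  rw [map_mul, ← Complex.exp_conj, hW_conj, hh_conj]

/-- **Lemma.** Given a sequence `{tₙ}` of distinct real numbers whose range is an
infinite discrete subset of `ℝ` (only finitely many points in any bounded set),
and a sequence `{sₙ}` of nonzero reals, there exists an entire function `S`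
whose zero set is exactly `{tₙ}`, all of whose zeros are simple, which is
real-symmetric (`S* = S`), and satisfies `|S'(tₙ)| = |sₙ|` for every `n`. -/
theorem exists_entire_with_prescribed_zeros_and_derivatives
    (t : ℕ → ℝ) (ht : Function.Injective t)
    (hdisc : ∀ R : ℝ, {n : ℕ | |t n| ≤ R}.Finite)
    (s : ℕ → ℝ) (hs : ∀ n, s n ≠ 0) :
    ∃ S : ℂ → ℂ,
      Differentiable ℂ S ∧
      (∀ z : ℂ, S z = 0 ↔ ∃ n : ℕ, z = (t n : ℂ)) ∧
      (∀ n : ℕ, deriv S (t n) ≠ 0) ∧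
      (∀ z : ℂ, (starRingEnd ℂ) (S ((starRingEnd ℂ) z)) = S z) ∧
      (∀ n : ℕ, ‖deriv S (t n)‖ = |s n|) :=
  exists_entire_with_prescribed_zeros_and_derivatives_general t ht hdisc s hs
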